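/- arXiv:2506.03853 — 2 statements merged into one kernel-verified Lean document; each statement's English description precedes it below -/
import Mathlib

section
/- Let T be a tree and suppose there exists a non-degenerate labeling l : V(T) → ℝ≥0 such that the ultrametric space (V(T), d_l) is separable. Then the vertex set V(T) is countable, i.e., |V(T)| ≤ ℵ₀. -/
open SimpleGraph

/-- For a tree `G` with labeling `l`, the "ultrametric" `d_l`: the maximum of the labels of the
vertices of the unique path joining `u` and `v` (and `0` if `u = v`). -/
noncomputable def treeDist {V : Type*} (G : SimpleGraph V) (hG : G.IsTree) (l : V → NNReal)
    (u v : V) : NNReal :=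
  letI := Classical.decEq V
  if u = v then 0 else ((hG.existsUnique_path u v).choose.support.map l).foldr max 0

/-- A labeling is non-degenerate if `max {l u, l v} > 0` for every edge `{u, v}`. -/
def Nondeg {V : Type*} (G : SimpleGraph V) (l : V → NNReal) : Prop :=
  ∀ u v : V, G.Adj u v → 0 < max (l u) (l v)

/-- A distance function is separable if there is a countable dense subset. -/
def SeparableWith {α : Type*} (d : α → α → NNReal) : Prop :=
  ∃ S : Set α, S.Countable ∧ ∀ x : α, ∀ ε : NNReal, 0 < ε → ∃ s ∈ S, d x s < ε

/-- A set is bounded if it is contained in a closed ball of positive radius. -/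
def BoundedWith {α : Type*} (d : α → α → NNReal) (A : Set α) : Prop :=
  ∃ c : α, ∃ r : NNReal, 0 < r ∧ ∀ x ∈ A, d c x ≤ r

/-- A distance function is locally finite if every bounded set is finite. -/
def LocallyFiniteWith {α : Type*} (d : α → α → NNReal) : Prop :=
  ∀ A : Set α, BoundedWith d A → A.Finite

/-- A graph is a ray if its vertices can be enumerated without repetition as
`x₁, x₂, …` with edges exactly `{xₙ, xₙ₊₁}`. -/
def IsRay {W : Type*} (R : SimpleGraph W) : Prop :=
  ∃ v : ℕ → W, Function.Bijective v ∧
    ∀ a b : W, R.Adj a b ↔ ∃ n : ℕ, (a = v n ∧ b = v (n + 1)) ∨ (a = v (n + 1) ∧ b = v n)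

/-- A tree is a star graph if some vertex `c` (the center) is adjacent to every other vertex. -/
def IsStar {W : Type*} (S : SimpleGraph W) : Prop :=
  S.IsTree ∧ ∃ c : W, ∀ v : W, v ≠ c → S.Adj c v

/-!
The distance from a vertex to any other vertex is at least its label, so a vertex with a positive
label is isolated and belongs to every dense set `S`. A vertex `x ∉ S` therefore has label `0`, and
non-degeneracy makes the labels of its neighbors positive, so that they all lie in `S`. The path
from `x` to a nearby point of `S` starts with a neighbor of small label; hence the labels of the
neighbors of `x` have infimum `0` without attaining it, and `x` has at least two neighbors in `S`.
In a tree two distinct vertices have at most one common neighbor, so there are at most as many such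
`x` as pairs of points of `S`.
-/

section Acyclic

variable {V : Type*} {G : SimpleGraph V}

theorem subsingleton_commonNeighbors_of_isAcyclic (hG : G.IsAcyclic) {a b : V} (hab : a ≠ b) :
    (G.commonNeighbors a b).Subsingleton := by
  intro x hx y hy
  have isPath_through {z : V} (haz : G.Adj a z) (hbz : G.Adj b z) :
      (Walk.cons haz hbz.symm.toWalk).IsPath := by
    simp [Walk.cons_isPath_iff, haz.ne, hbz.ne', hab]
  rw [mem_commonNeighbors] at hx hy
  have paths_eq : Walk.cons hx.1 hx.2.symm.toWalk = Walk.cons hy.1 hy.2.symm.toWalk :=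
    congrArg Subtype.val <| (hG.subsingleton_path a b).elim
      ⟨_, isPath_through hx.1 hx.2⟩ ⟨_, isPath_through hy.1 hy.2⟩
  simpa using congrArg Walk.snd paths_eq

theorem countable_setOf_nontrivial_neighborSet_inter (hG : G.IsAcyclic) {S : Set V}
    (hS : S.Countable) : {x | (G.neighborSet x ∩ S).Nontrivial}.Countable := by
  have hpairs : (⋃ p ∈ S.offDiag, G.commonNeighbors p.1 p.2).Countable :=
    ((hS.prod hS).mono S.offDiag_subset_prod).biUnion fun p hp =>
      (subsingleton_commonNeighbors_of_isAcyclic hG hp.2.2).countable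
  refine hpairs.mono ?_
  rintro x ⟨a, ⟨hxa, ha⟩, b, ⟨hxb, hb⟩, hab⟩
  exact Set.mem_biUnion (x := (a, b)) ⟨ha, hb, hab⟩ ⟨hxa.symm, hxb.symm⟩

end Acyclic

section TreeDist

variable {V : Type*} {G : SimpleGraph V} (hG : G.IsTree) (l : V → NNReal) {u v : V}

theorem label_le_treeDist_of_mem_support (huv : u ≠ v) {p : G.Walk u v} (hp : p.IsPath) {w : V}
    (hw : w ∈ p.support) : l w ≤ treeDist G hG l u v := by
  have hchoose : (hG.existsUnique_path u v).choose = p :=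
    (hG.existsUnique_path u v).unique (hG.existsUnique_path u v).choose_spec.1 hp
  rw [treeDist, if_neg huv, hchoose]
  exact List.le_max_of_le' 0 (List.mem_map_of_mem hw) le_rfl

theorem label_le_treeDist_left (huv : u ≠ v) : l u ≤ treeDist G hG l u v := by
  obtain ⟨p, hp, -⟩ := hG.existsUnique_path u v
  exact label_le_treeDist_of_mem_support hG l huv hp p.start_mem_support

theorem exists_adj_label_le_treeDist (huv : u ≠ v) :
    ∃ w, G.Adj u w ∧ l w ≤ treeDist G hG l u v := by
  obtain ⟨p, hp, -⟩ := hG.existsUnique_path u v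
  exact ⟨p.snd, p.adj_snd (Walk.not_nil_of_ne huv),
    label_le_treeDist_of_mem_support hG l huv hp (p.getVert_mem_support 1)⟩

end TreeDist

/-- A set is dense for the distance function `d` if every point is at arbitrarily small distance
from it; `SeparableWith d` asserts that some countable set has this property. -/
def DenseWith {α : Type*} (d : α → α → NNReal) (S : Set α) : Prop :=
  ∀ x : α, ∀ ε : NNReal, 0 < ε → ∃ s ∈ S, d x s < ε

namespace DenseWith

variable {V : Type*} {G : SimpleGraph V} {hG : G.IsTree} {l : V → NNReal} {S : Set V} {x : V}

theorem mem_of_label_pos (hS : DenseWith (treeDist G hG l) S) (hx : 0 < l x) : x ∈ S := by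
  obtain ⟨s, hs, hlt⟩ := hS x (l x) hx
  by_contra hxS
  exact (label_le_treeDist_left hG l (ne_of_mem_of_not_mem hs hxS).symm).not_gt hlt

theorem exists_adj_label_lt (hS : DenseWith (treeDist G hG l) S) (hx : x ∉ S) {ε : NNReal}
    (hε : 0 < ε) : ∃ y, G.Adj x y ∧ l y < ε := by
  obtain ⟨s, hs, hlt⟩ := hS x ε hε
  obtain ⟨y, hxy, hle⟩ := exists_adj_label_le_treeDist hG l (ne_of_mem_of_not_mem hs hx).symm
  exact ⟨y, hxy, hle.trans_lt hlt⟩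

theorem label_pos_of_adj (hS : DenseWith (treeDist G hG l) S) (hl : Nondeg G l) (hx : x ∉ S) {y : V}
    (hxy : G.Adj x y) : 0 < l y :=
  (lt_max_iff.1 (hl x y hxy)).resolve_left fun hpos => hx (hS.mem_of_label_pos hpos)

theorem nontrivial_neighborSet_inter (hS : DenseWith (treeDist G hG l) S) (hl : Nondeg G l)
    (hx : x ∉ S) : (G.neighborSet x ∩ S).Nontrivial := by
  have neighbor_mem {y : V} (hxy : G.Adj x y) : y ∈ G.neighborSet x ∩ S :=
    ⟨hxy, hS.mem_of_label_pos (hS.label_pos_of_adj hl hx hxy)⟩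
  obtain ⟨a, hxa, -⟩ := hS.exists_adj_label_lt hx one_pos
  obtain ⟨b, hxb, hba⟩ := hS.exists_adj_label_lt hx (hS.label_pos_of_adj hl hx hxa)
  exact ⟨a, neighbor_mem hxa, b, neighbor_mem hxb, fun hab => hba.ne (hab ▸ rfl)⟩

end DenseWith

theorem countable_of_exists_separable {V : Type*} (G : SimpleGraph V) (hG : G.IsTree)
    (l : V → NNReal) (hl : Nondeg G l) (hsep : SeparableWith (treeDist G hG l)) :
    Countable V := by
  obtain ⟨S, hScount, hSdense⟩ := hsep
  replace hSdense : DenseWith (treeDist G hG l) S := hSdense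
  have hcompl : Sᶜ.Countable :=
    (countable_setOf_nontrivial_neighborSet_inter hG.isAcyclic hScount).mono fun _ hx =>
      hSdense.nontrivial_neighborSet_inter hl hx
  rw [← Set.countable_univ_iff, ← Set.union_compl_self S]
  exact hScount.union hcompl
end

section
/- Let T be a tree. Then the following statements are equivalent: (i) there exists a non-degenerate labeling l : V(T) → ℝ≥0 such that (V(T), d_l) is a separable ultrametric space; (ii) for every star graph S that is a subgraph of T there exists a non-degenerate labeling l_S : V(S) → ℝ≥0 such that the ultrametric space (V(S), d_{l_S}) is separable. -/
open SimpleGraph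

/-!
Both conditions turn out to say that `V` is countable. Given a dense set `S`, each neighbour `u` of
a vertex `c` is closer than `max (l c) (l u)` to some `s ∈ S`, so `u` is joined to `s` by a path
avoiding `c`. In a tree, distinct neighbours of `c` lie in distinct components of the complement of
`c`, so these points `s` are distinct and `c` has only countably many neighbours. A connected graph
with countable neighbourhoods is countable, and on a countable vertex set every labeling is
separable. Finally, the closed neighbourhood of `c` induces a star, so countability of all stars
also makes all neighbourhoods countable.
-/

section Graph

variable {V : Type*} {G : SimpleGraph V}

theorem mem_support_of_adj_of_adj (hG : G.IsAcyclic) {c u v : V} (hu : G.Adj c u)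
    (hv : G.Adj c v) (huv : u ≠ v) (p : G.Walk u v) : c ∈ p.support := by
  classical
  let viaCenter : G.Walk u v := .cons hu.symm (.cons hv .nil)
  have viaCenter_isPath : viaCenter.IsPath := by
    simp [viaCenter, Walk.cons_isPath_iff, hu.ne', hv.ne, huv]
  have bypass_eq : p.bypass = viaCenter :=
    congrArg Subtype.val <|
      (hG.subsingleton_path u v).elim ⟨_, p.bypass_isPath⟩ ⟨_, viaCenter_isPath⟩
  apply p.support_bypass_subset_support
  simp [bypass_eq, viaCenter]

theorem eq_of_adj_of_adj_of_notMem_support (hG : G.IsAcyclic) {c u v s : V} (hu : G.Adj c u)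
    (hv : G.Adj c v) {p : G.Walk u s} {q : G.Walk v s} (hp : c ∉ p.support)
    (hq : c ∉ q.support) : u = v := by
  by_contra huv
  have hc := mem_support_of_adj_of_adj hG hu hv huv (p.append q.reverse)
  rw [Walk.mem_support_append_iff, Walk.support_reverse, List.mem_reverse] at hc
  exact hc.elim hp hq

theorem countable_setOf_exists_walk_length_eq (h : ∀ c, (G.neighborSet c).Countable) (n : ℕ)
    (u : V) : {v | ∃ p : G.Walk u v, p.length = n}.Countable := by
  induction n generalizing u with
  | zero =>
    refine (Set.countable_singleton u).mono ?_
    rintro v ⟨p, hp⟩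
    exact (Walk.eq_of_length_eq_zero hp).symm
  | succ n ih =>
    refine ((h u).biUnion fun w _ ↦ ih w).mono ?_
    rintro v ⟨_ | ⟨huw, p⟩, hp⟩
    · exact absurd hp n.succ_ne_zero.symm
    · exact Set.mem_biUnion huw ⟨p, Nat.succ_injective hp⟩

theorem countable_of_countable_neighborSet (hG : G.Preconnected)
    (h : ∀ c, (G.neighborSet c).Countable) : Countable V := by
  rcases isEmpty_or_nonempty V with _ | ⟨⟨root⟩⟩
  · infer_instance
  · rw [← Set.countable_univ_iff]
    refine (Set.countable_iUnion fun n ↦ countable_setOf_exists_walk_length_eq h n root).mono ?_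
    intro v _
    obtain ⟨p⟩ := hG root v
    exact Set.mem_iUnion.2 ⟨p.length, p, rfl⟩

theorem isStar_coe_induce_insert_neighborSet (hG : G.IsAcyclic) (c : V) :
    IsStar ((⊤ : G.Subgraph).induce (insert c (G.neighborSet c))).coe := by
  set H := (⊤ : G.Subgraph).induce (insert c (G.neighborSet c))
  let center : H.verts := ⟨c, Set.mem_insert c _⟩
  have center_adj (v : H.verts) (hv : v ≠ center) : H.coe.Adj center v := by
    obtain ⟨v, rfl | hcv⟩ := v
    · exact absurd rfl hv
    · exact ⟨Set.mem_insert c _, Or.inr hcv, hcv⟩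
  have connected : H.coe.Connected := .of_isUniversal fun v hv ↦ center_adj v hv.symm
  exact ⟨⟨connected, hG.subgraph H⟩, center, center_adj⟩

end Graph

section TreeDist

variable {V : Type*} {G : SimpleGraph V} (hG : G.IsTree)

theorem treeDist_self (l : V → NNReal) (u : V) : treeDist G hG l u u = 0 :=
  if_pos rfl

theorem le_treeDist_of_mem_support {l : V → NNReal} {u v w : V} (huv : u ≠ v) {p : G.Walk u v}
    (hp : p.IsPath) (hw : w ∈ p.support) : l w ≤ treeDist G hG l u v := by
  have hpath := (hG.existsUnique_path u v).choose_spec.1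
  obtain rfl := (hG.existsUnique_path u v).unique hpath hp
  rw [treeDist, if_neg huv]
  exact List.le_max_of_le' 0 (List.mem_map_of_mem hw) le_rfl

theorem exists_walk_notMem_support_of_treeDist_lt {l : V → NNReal} {c u v : V} (hcu : c ≠ u)
    (h : treeDist G hG l u v < max (l c) (l u)) : ∃ p : G.Walk u v, c ∉ p.support := by
  rcases eq_or_ne u v with rfl | huv
  · exact ⟨.nil, by simpa using hcu⟩
  · obtain ⟨p, hp, -⟩ := hG.existsUnique_path u v
    refine ⟨p, fun hc ↦ h.not_ge (max_le ?_ ?_)⟩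
    · exact le_treeDist_of_mem_support hG huv hp hc
    · exact le_treeDist_of_mem_support hG huv hp p.start_mem_support

theorem countable_neighborSet_of_separableWith {l : V → NNReal} (hl : Nondeg G l)
    (hsep : SeparableWith (treeDist G hG l)) (c : V) : (G.neighborSet c).Countable := by
  obtain ⟨S, hS, hdense⟩ := hsep
  have exists_avoiding (u : V) (hu : u ∈ G.neighborSet c) :
      ∃ s ∈ S, ∃ p : G.Walk u s, c ∉ p.support := by
    obtain ⟨s, hs, hlt⟩ := hdense u _ (hl c u hu)
    exact ⟨s, hs, exists_walk_notMem_support_of_treeDist_lt hG hu.ne hlt⟩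
  choose! f hfS hf using exists_avoiding
  refine Set.MapsTo.countable_of_injOn hfS ?_ hS
  intro u hu v hv huv
  obtain ⟨p, hp⟩ := hf u hu
  obtain ⟨q, hq⟩ : ∃ q : G.Walk v (f u), c ∉ q.support := huv ▸ hf v hv
  exact eq_of_adj_of_adj_of_notMem_support hG.isAcyclic hu hv hp hq

theorem separableWith_treeDist_of_countable [Countable V] (l : V → NNReal) :
    SeparableWith (treeDist G hG l) :=
  ⟨Set.univ, Set.countable_univ, fun x _ hε ↦ ⟨x, trivial, (treeDist_self hG l x).trans_lt hε⟩⟩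

theorem exists_nondeg_separableWith_treeDist_iff_countable :
    (∃ l : V → NNReal, Nondeg G l ∧ SeparableWith (treeDist G hG l)) ↔ Countable V := by
  constructor
  · rintro ⟨l, hl, hsep⟩
    exact countable_of_countable_neighborSet hG.preconnected
      (countable_neighborSet_of_separableWith hG hl hsep)
  · intro _
    exact ⟨1, fun _ _ _ ↦ by simp, separableWith_treeDist_of_countable hG 1⟩

end TreeDist

theorem exists_separable_iff_every_star_subgraph {V : Type*} (G : SimpleGraph V)
    (hG : G.IsTree) :
    (∃ l : V → NNReal, Nondeg G l ∧ SeparableWith (treeDist G hG l)) ↔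
    (∀ H : G.Subgraph, ∀ hS : IsStar H.coe,
      ∃ lS : H.verts → NNReal, Nondeg H.coe lS ∧
        SeparableWith (treeDist H.coe hS.1 lS)) := by
  simp only [exists_nondeg_separableWith_treeDist_iff_countable]
  constructor
  · intro _ H _
    infer_instance
  · intro h
    refine countable_of_countable_neighborSet hG.preconnected fun c ↦ ?_
    have star_countable := h _ (isStar_coe_induce_insert_neighborSet hG.isAcyclic c)
    exact (Set.countable_coe_iff.1 star_countable).mono (Set.subset_insert c _)
end
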